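/- Let 𝐂 be the middle-third Cantor set, s = log 2 / log 3, ℋ^s the s-dimensional Hausdorff measure on ℝ, and ℛ = ⋃{𝐂 + k/3ⁿ : k, n ∈ ℤ}. On the Hilbert space H = L²(ℛ, ℋ^s|_ℛ) define the unitary operators (Uf)(x) = (1/√2) f(x/3) and (Tf)(x) = f(x − 1). Then the pair {U, T} is reducible: there exists a closed subspace K of H with K ≠ {0} and K ≠ H that is invariant under U, U⁻¹, T and T⁻¹; equivalently, there exists a bounded operator on H commuting with both U and T that is not a scalar multiple of the identity. -/

import Mathlib

open MeasureTheory

noncomputable section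

/-- The set `ℛ = ⋃_{k, n ∈ ℤ} (𝐂 + k/3ⁿ)` of all translates of the Cantor set by triadic
rationals. -/
def cantorTranslates : Set ℝ :=
  ⋃ (k : ℤ) (n : ℤ), (fun x : ℝ => x + (k : ℝ) / (3 : ℝ) ^ n) '' cantorSet

/-- The Hausdorff dimension `s = log 2 / log 3` of the Cantor set. -/
def cantorDim : ℝ := Real.log 2 / Real.log 3

/-- The `s`-dimensional Hausdorff measure restricted to `ℛ`. -/
def cantorMeasure : Measure ℝ :=
  (MeasureTheory.Measure.hausdorffMeasure cantorDim).restrict cantorTranslates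


open Filter Topology
open scoped ENNReal NNReal

lemma cantorDim_pos : 0 < cantorDim := by
  unfold cantorDim
  have := Real.log_pos (show (1:ℝ) < 2 by norm_num)
  have := Real.log_pos (show (1:ℝ) < 3 by norm_num)
  positivity

lemma three_rpow_cantorDim : (3:ℝ) ^ cantorDim = 2 := by
  unfold cantorDim
  have h3 := Real.log_pos (show (1:ℝ) < 3 by norm_num)
  rw [Real.rpow_def_of_pos (by norm_num), mul_div_cancel₀ _ h3.ne', Real.exp_log (by norm_num)]

lemma inv_three_pow_rpow (n : ℕ) : (((3:ℝ) ^ n)⁻¹) ^ cantorDim = ((2:ℝ) ^ n)⁻¹ := by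
  rw [Real.inv_rpow (by positivity), ← Real.rpow_natCast, ← Real.rpow_mul (by norm_num),
    mul_comm, Real.rpow_mul (by norm_num), three_rpow_cantorDim, Real.rpow_natCast]

lemma cantor_finite : (Measure.hausdorffMeasure cantorDim : Measure ℝ) cantorSet ≠ ⊤ := by
  let t : ∀ n : ℕ, (Fin n → Bool) → Set ℝ := fun n i =>
    {x | x ∈ cantorSet ∧ ∀ j : Fin n, (cantorToBinary x).get j = i j}
  have hd : ∀ n i, Metric.ediam (t n i) ≤ ENNReal.ofReal (((3:ℝ) ^ n)⁻¹) := by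
    intro n i
    apply Metric.ediam_le
    rintro x ⟨hx, hx'⟩ y ⟨hy, hy'⟩
    rw [edist_dist, Real.dist_eq]
    apply ENNReal.ofReal_le_ofReal
    rw [← ofDigits_cantorToTernary hx, ← ofDigits_cantorToTernary hy]
    refine (Real.abs_ofDigits_sub_ofDigits_le (n := n) ?_).trans (by simp)
    intro j hj
    have h1 := hx' ⟨j, hj⟩
    have h2 := hy' ⟨j, hj⟩
    simp only [cantorToTernary, Stream'.get_map]
    simp only at h1 h2
    rw [h1, h2]
  have key := Measure.hausdorffMeasure_le_liminf_sum cantorDim cantorSet (l := atTop)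
    (fun n : ℕ => ENNReal.ofReal (((3:ℝ) ^ n)⁻¹)) (by
      rw [← ENNReal.ofReal_zero]
      apply ENNReal.tendsto_ofReal
      simp_rw [← inv_pow]
      exact tendsto_pow_atTop_nhds_zero_of_lt_one (by norm_num) (by norm_num)) t
    (Eventually.of_forall hd) (Eventually.of_forall fun n x hx => by
      simp only [Set.mem_iUnion]
      exact ⟨fun j => (cantorToBinary x).get j, hx, fun j => rfl⟩)
  refine ne_top_of_le_ne_top (b := 1) ENNReal.one_ne_top (key.trans ?_)
  have : ∀ n : ℕ, ∑ i, Metric.ediam (t n i) ^ cantorDim ≤ 1 := by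
    intro n
    calc ∑ i, Metric.ediam (t n i) ^ cantorDim
        ≤ ∑ i : Fin n → Bool, ENNReal.ofReal (((2:ℝ) ^ n)⁻¹) := by
          apply Finset.sum_le_sum
          intro i _
          refine (ENNReal.rpow_le_rpow (hd n i) cantorDim_pos.le).trans ?_
          rw [ENNReal.ofReal_rpow_of_nonneg (by positivity) cantorDim_pos.le, inv_three_pow_rpow]
      _ = 1 := by
          simp only [Finset.sum_const, Finset.card_univ, Fintype.card_fun, Fintype.card_bool, Fintype.card_fin, nsmul_eq_mul]
          rw [ENNReal.ofReal_inv_of_pos (by positivity), ENNReal.ofReal_pow (by norm_num)]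
          simp only [Nat.cast_pow, Nat.cast_ofNat, ENNReal.ofReal_ofNat]
          exact ENNReal.mul_inv_cancel (by simp) (by simp)
  calc _ ≤ liminf (fun _ : ℕ => (1 : ℝ≥0∞)) atTop :=
        liminf_le_liminf (Eventually.of_forall this)
    _ = 1 := by simp

lemma cantor_sep {x y : ℝ} (hx : x ∈ cantorSet) (hy : y ∈ cantorSet) (n : ℕ)
    (h : ∀ i < n, (cantorToBinary x).get i = (cantorToBinary y).get i)
    (hn : (cantorToBinary x).get n ≠ (cantorToBinary y).get n) :
    ((3:ℝ) ^ (n+1))⁻¹ ≤ |x - y| := by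
  wlog hw : (cantorToBinary x).get n = true ∧ (cantorToBinary y).get n = false generalizing x y
  · rw [abs_sub_comm]
    refine this hy hx (fun i hi => (h i hi).symm) hn.symm ?_
    revert hn hw
    cases (cantorToBinary x).get n <;> cases (cantorToBinary y).get n <;> simp
  obtain ⟨h1, h2⟩ := hw
  have ex := ofDigits_cantorToTernary hx
  have ey := ofDigits_cantorToTernary hy
  rw [Real.ofDigits_eq_sum_add_ofDigits _ (n+1), Finset.sum_range_succ] at ex ey
  have hS : ∑ i ∈ Finset.range n, Real.ofDigitsTerm (cantorToTernary x).get i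
      = ∑ i ∈ Finset.range n, Real.ofDigitsTerm (cantorToTernary y).get i := by
    refine Finset.sum_congr rfl fun i hi => ?_
    simp [Real.ofDigitsTerm, cantorToTernary, Stream'.get_map, h i (Finset.mem_range.mp hi)]
  have tx : Real.ofDigitsTerm (cantorToTernary x).get n = 2 * ((3:ℝ)^(n+1))⁻¹ := by
    simp [Real.ofDigitsTerm, cantorToTernary, Stream'.get_map, h1]
  have ty : Real.ofDigitsTerm (cantorToTernary y).get n = 0 := by
    simp [Real.ofDigitsTerm, cantorToTernary, Stream'.get_map, h2]
  have a1 := Real.ofDigits_nonneg (fun i => (cantorToTernary x).get (i + (n+1)))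
  have a2 := Real.ofDigits_le_one (fun i => (cantorToTernary y).get (i + (n+1)))
  have hp : 0 < ((3:ℝ)^(n+1))⁻¹ := by positivity
  push_cast at ex ey
  refine le_trans ?_ (le_abs_self _)
  nlinarith [mul_nonneg hp.le a1, mul_le_mul_of_nonneg_left a2 hp.le]

def cantorFn (x : ℝ) : ℝ :=
  Real.ofDigits (b := 2) fun n => cond ((cantorToBinary x).get n) 1 0

lemma cantorFn_holder : HolderOnWith 2 (NNReal.mk cantorDim cantorDim_pos.le) cantorFn cantorSet := by
  intro x hx y hy
  rcases eq_or_ne x y with rfl | hxy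
  · simp
  have hne : ∃ n, (cantorToBinary x).get n ≠ (cantorToBinary y).get n := by
    by_contra! hcon
    apply hxy
    rw [← ofDigits_cantorToTernary hx, ← ofDigits_cantorToTernary hy]
    congr 1
    funext n
    simp [cantorToTernary, Stream'.get_map, hcon n]
  classical
  let n := Nat.find hne
  have hn := Nat.find_spec hne
  have hlt : ∀ i < n, (cantorToBinary x).get i = (cantorToBinary y).get i := fun i hi => by
    simpa using Nat.find_min hne hi
  have h1 := cantor_sep hx hy n hlt hn
  have h2 : |cantorFn x - cantorFn y| ≤ ((2:ℝ)^n)⁻¹ := by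
    refine (Real.abs_ofDigits_sub_ofDigits_le (n := n) ?_).trans (by simp)
    intro i hi
    rw [hlt i hi]
  have h3 := Real.rpow_le_rpow (by positivity) h1 cantorDim_pos.le
  rw [inv_three_pow_rpow] at h3
  rw [edist_dist, edist_dist, Real.dist_eq, Real.dist_eq, NNReal.coe_mk,
    ENNReal.ofReal_rpow_of_nonneg (abs_nonneg _) cantorDim_pos.le]
  have : ((2:ℝ≥0) : ℝ≥0∞) = ENNReal.ofReal 2 := by simp
  rw [this, ← ENNReal.ofReal_mul (by norm_num)]
  apply ENNReal.ofReal_le_ofReal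
  have : ((2:ℝ)^n)⁻¹ = 2 * ((2:ℝ)^(n+1))⁻¹ := by rw [pow_succ]; field_simp
  linarith

lemma cantorFn_surj : Set.Icc (0:ℝ) 1 ⊆ cantorFn '' cantorSet := by
  intro t ht
  obtain ⟨d, -, hd⟩ := Real.ofDigits_SurjOn (b := 2) (by norm_num) ht
  let b : ℕ → Bool := fun n => decide (d n = 1)
  refine ⟨(cantorSetEquivNatToBool.symm b : ℝ), (cantorSetEquivNatToBool.symm b).2, ?_⟩
  have h := cantorSetEquivNatToBool.apply_symm_apply b
  have h' : (cantorToBinary (cantorSetEquivNatToBool.symm b : ℝ)).get = b := h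
  rw [cantorFn, ← hd]
  congr 1
  funext n
  rw [h']
  simp only [b]
  have : d n = 0 ∨ d n = 1 := by omega
  rcases this with h | h <;> simp [h]

lemma cantor_pos : (Measure.hausdorffMeasure cantorDim : Measure ℝ) cantorSet ≠ 0 := by
  intro h0
  have h := cantorFn_holder.hausdorffMeasure_image_le (d := 1)
    (by exact_mod_cast cantorDim_pos) zero_le_one
  simp only [NNReal.coe_mk, mul_one] at h
  rw [h0, mul_zero, hausdorffMeasure_real] at h
  have h2 := (measure_mono cantorFn_surj).trans h
  simp at h2

open scoped InnerProductSpace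

lemma lie_mul_apply {H : Type*} [NormedAddCommGroup H] [InnerProductSpace ℂ H]
    (A B : H ≃ₗᵢ[ℂ] H) (x : H) : (A * B) x = A (B x) := rfl

lemma cantorSet_subset_translates : cantorSet ⊆ cantorTranslates := by
  intro x hx
  simp only [cantorTranslates, Set.mem_iUnion]
  exact ⟨0, 0, x, hx, by simp⟩

lemma measurable_cantorTranslates : MeasurableSet cantorTranslates := by
  unfold cantorTranslates
  refine MeasurableSet.iUnion fun k => MeasurableSet.iUnion fun n => ?_
  exact (isCompact_cantorSet.image (by fun_prop)).isClosed.measurableSet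

lemma div_three_mem_cantorSet {x : ℝ} (hx : x ∈ cantorSet) : x / 3 ∈ cantorSet := by
  rw [cantorSet_eq_union_halves]
  exact Or.inl ⟨x, hx, rfl⟩

lemma div_three_mem_translates {x : ℝ} (hx : x ∈ cantorTranslates) :
    x / 3 ∈ cantorTranslates := by
  simp only [cantorTranslates, Set.mem_iUnion] at hx ⊢
  obtain ⟨k, n, c, hc, rfl⟩ := hx
  refine ⟨k, n + 1, c / 3, div_three_mem_cantorSet hc, ?_⟩
  simp only
  rw [zpow_add₀ (by norm_num), zpow_one]
  field_simp

lemma sub_one_mem_translates {x : ℝ} (hx : x ∈ cantorTranslates) :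
    x - 1 ∈ cantorTranslates := by
  simp only [cantorTranslates, Set.mem_iUnion] at hx ⊢
  obtain ⟨k, n, c, hc, rfl⟩ := hx
  rcases n with n | n
  · refine ⟨k - 3 ^ n, n, c, hc, ?_⟩
    simp
    field_simp
    ring
  · refine ⟨k * 3 ^ (n+1) - 1, 0, c, hc, ?_⟩
    simp
    ring

lemma qmp_aux (f g : ℝ → ℝ) (hf : Measurable f) {L : ℝ≥0} (hg : LipschitzWith L g)
    (hgf : ∀ x, g (f x) = x) (hR : ∀ x ∈ cantorTranslates, f x ∈ cantorTranslates) :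
    Measure.QuasiMeasurePreserving f cantorMeasure cantorMeasure := by
  refine ⟨hf, Measure.AbsolutelyContinuous.mk fun N hN h0 => ?_⟩
  rw [Measure.map_apply hf hN]
  unfold cantorMeasure at *
  rw [Measure.restrict_apply hN] at h0
  rw [Measure.restrict_apply (hf hN)]
  refine measure_mono_null (t := g '' (N ∩ cantorTranslates)) ?_ ?_
  · rintro x ⟨h1, h2⟩
    exact ⟨f x, ⟨h1, hR x h2⟩, hgf x⟩
  · have := hg.hausdorffMeasure_image_le cantorDim_pos.le (N ∩ cantorTranslates)
    rw [h0, mul_zero] at this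
    exact le_antisymm this zero_le

lemma qmp_div : Measure.QuasiMeasurePreserving (fun x : ℝ => x / 3) cantorMeasure cantorMeasure :=
  qmp_aux _ (fun x => x * 3) (by fun_prop) (L := 3)
    (LipschitzWith.of_dist_le_mul fun x y => by
      rw [Real.dist_eq, Real.dist_eq, ← sub_mul, abs_mul]; simp [mul_comm])
    (fun x => by simp) fun x hx => div_three_mem_translates hx

lemma qmp_sub : Measure.QuasiMeasurePreserving (fun x : ℝ => x - 1) cantorMeasure cantorMeasure :=
  qmp_aux _ (fun x => x + 1) (by fun_prop) (L := 1)
    (LipschitzWith.of_dist_le_mul fun x y => by simp)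
    (fun x => by simp) fun x hx => sub_one_mem_translates hx

lemma cm_cantor : cantorMeasure cantorSet
    = (Measure.hausdorffMeasure cantorDim : Measure ℝ) cantorSet := by
  unfold cantorMeasure
  rw [Measure.restrict_apply isClosed_cantorSet.measurableSet,
    Set.inter_eq_left.mpr cantorSet_subset_translates]

lemma cm_singleton (x : ℝ) : cantorMeasure {x} = 0 := by
  have := Measure.nullSingletonClass_hausdorff (X := ℝ) cantorDim_pos
  unfold cantorMeasure
  exact le_antisymm ((Measure.restrict_apply_le _ _).trans (by simp)) zero_le

def phi0 : Lp ℂ 2 cantorMeasure :=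
  indicatorConstLp 2 isClosed_cantorSet.measurableSet
    (by rw [cm_cantor]; exact cantor_finite) (1:ℂ)

lemma phi0_ae : ⇑phi0 =ᵐ[cantorMeasure] cantorSet.indicator fun _ => (1:ℂ) :=
  indicatorConstLp_coeFn

lemma phi0_ne : phi0 ≠ 0 := by
  intro h
  have h1 : ‖phi0‖ = 0 := by rw [h, norm_zero]
  rw [phi0, norm_indicatorConstLp (by norm_num) (by norm_num)] at h1
  simp only [norm_one, one_mul] at h1
  have : 0 < cantorMeasure.real cantorSet := by
    rw [Measure.real, ENNReal.toReal_pos_iff, cm_cantor]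
    exact ⟨pos_iff_ne_zero.mpr cantor_pos, lt_top_iff_ne_top.mpr cantor_finite⟩
  have := Real.rpow_pos_of_pos this (1 / (2:ℝ≥0∞).toReal)
  linarith

section uT
variable (U T : Lp ℂ 2 cantorMeasure ≃ₗᵢ[ℂ] Lp ℂ 2 cantorMeasure)

lemma UT_comm
    (hU : ∀ f : Lp ℂ 2 cantorMeasure,
      ⇑(U f) =ᵐ[cantorMeasure] fun x => ((Real.sqrt 2 : ℝ) : ℂ)⁻¹ * f (x / 3))
    (hT : ∀ f : Lp ℂ 2 cantorMeasure, ⇑(T f) =ᵐ[cantorMeasure] fun x => f (x - 1))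
    (f : Lp ℂ 2 cantorMeasure) : U (T f) = T (T (T (U f))) := by
  apply Lp.ext
  have h1 := qmp_div.ae (hT f)
  have h2 := qmp_sub.ae (hT (T (U f)))
  have h3 := qmp_sub.ae (qmp_sub.ae (hT (U f)))
  have h4 := qmp_sub.ae (hT (U f))
  have h5 := qmp_sub.ae (qmp_sub.ae (qmp_sub.ae (hU f)))
  filter_upwards [hU (T f), h1, hT (T (T (U f))), h2, h3, h5] with x a b c d e g
  rw [a, b, c, d, e, g]
  congr 2
  ring

lemma T_pow_ae
    (hT : ∀ f : Lp ℂ 2 cantorMeasure, ⇑(T f) =ᵐ[cantorMeasure] fun x => f (x - 1)) (k : ℕ) :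
    ⇑((T ^ k) phi0) =ᵐ[cantorMeasure] fun x => cantorSet.indicator (fun _ => (1:ℂ)) (x - k) := by
  induction k with
  | zero => simpa using phi0_ae
  | succ k ih =>
    rw [pow_succ']
    have := qmp_sub.ae ih
    filter_upwards [hT ((T ^ k) phi0), this] with x a b
    rw [lie_mul_apply, a, b]
    congr 1
    push_cast
    ring

lemma U_phi0
    (hU : ∀ f : Lp ℂ 2 cantorMeasure,
      ⇑(U f) =ᵐ[cantorMeasure] fun x => ((Real.sqrt 2 : ℝ) : ℂ)⁻¹ * f (x / 3))
    (hT : ∀ f : Lp ℂ 2 cantorMeasure, ⇑(T f) =ᵐ[cantorMeasure] fun x => f (x - 1)) :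
    U phi0 = ((Real.sqrt 2 : ℝ) : ℂ)⁻¹ • (phi0 + T (T phi0)) := by
  apply Lp.ext
  have h2 := T_pow_ae T hT 2
  rw [pow_two, lie_mul_apply] at h2
  filter_upwards [hU phi0, qmp_div.ae phi0_ae, phi0_ae, h2,
    Lp.coeFn_smul ((Real.sqrt 2 : ℝ) : ℂ)⁻¹ (phi0 + T (T phi0)),
    Lp.coeFn_add phi0 (T (T phi0))] with x a b c d e g
  rw [a, b, e, Pi.smul_apply, g, Pi.add_apply, c, d, smul_eq_mul]
  congr 1
  have hiff : x / 3 ∈ cantorSet ↔ x ∈ cantorSet ∨ x - 2 ∈ cantorSet := by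
    conv_lhs => rw [cantorSet_eq_union_halves]
    constructor
    · rintro (⟨y, hy, h⟩ | ⟨y, hy, h⟩)
      · left; simp only at h; rwa [show x = y by linarith]
      · right; simp only at h; rwa [show x - 2 = y by linarith]
    · rintro (h | h)
      · exact Or.inl ⟨x, h, rfl⟩
      · exact Or.inr ⟨x - 2, h, by ring⟩
  have hdis : ¬ (x ∈ cantorSet ∧ x - 2 ∈ cantorSet) := by
    rintro ⟨h1, h2⟩
    have := cantorSet_subset_unitInterval h1
    have := cantorSet_subset_unitInterval h2
    simp only [Set.mem_Icc] at *
    linarith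
  push_cast
  by_cases h1 : x ∈ cantorSet <;> by_cases h2 : x - 2 ∈ cantorSet <;>
    simp_all [Set.indicator]

lemma inner_T_pow
    (hT : ∀ f : Lp ℂ 2 cantorMeasure, ⇑(T f) =ᵐ[cantorMeasure] fun x => f (x - 1)) (k : ℕ)
    (hk : k ≠ 0) : ⟪phi0, (T ^ k) phi0⟫_ℂ = 0 := by
  rw [L2.inner_def]
  apply integral_eq_zero_of_ae
  have h1 : ∀ᵐ x ∂cantorMeasure, x ≠ 1 := by
    rw [ae_iff]; simpa using cm_singleton 1
  filter_upwards [T_pow_ae T hT k, phi0_ae, h1] with x a b c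
  rw [a, b]
  by_cases h1 : x ∈ cantorSet <;> by_cases h2 : x - k ∈ cantorSet
  · exfalso
    have := cantorSet_subset_unitInterval h1
    have := cantorSet_subset_unitInterval h2
    have : (1:ℝ) ≤ k := by exact_mod_cast Nat.one_le_iff_ne_zero.mpr hk
    simp only [Set.mem_Icc] at *
    apply c
    linarith
  all_goals simp [h1, h2]

end uT


section abstr
variable {H : Type*} [NormedAddCommGroup H] [InnerProductSpace ℂ H] 

def KW (U : H ≃ₗᵢ[ℂ] H) (W : Submodule ℂ H) : Submodule ℂ H where
  carrier := {x | ∀ ε > 0, ∀ᶠ n : ℕ in atTop, ∃ y ∈ W, ‖(U ^ n) x - y‖ < ε}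
  zero_mem' := fun ε hε => Eventually.of_forall fun n => ⟨0, W.zero_mem, by simpa using hε⟩
  add_mem' := by
    intro a b ha hb ε hε
    filter_upwards [ha (ε/2) (by positivity), hb (ε/2) (by positivity)] with n h1 h2
    obtain ⟨y, hy, hy'⟩ := h1
    obtain ⟨z, hz, hz'⟩ := h2
    refine ⟨y + z, W.add_mem hy hz, ?_⟩
    rw [map_add, add_sub_add_comm]
    exact (norm_add_le _ _).trans_lt (by linarith)
  smul_mem' := by
    intro c a ha ε hε
    filter_upwards [ha (ε/(‖c‖+1)) (by positivity)] with n h1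
    obtain ⟨y, hy, hy'⟩ := h1
    refine ⟨c • y, W.smul_mem c hy, ?_⟩
    rw [map_smul, ← smul_sub, norm_smul]
    rw [lt_div_iff₀ (by positivity)] at hy'
    nlinarith [norm_nonneg ((U ^ n) a - y), norm_nonneg c]

lemma mem_KW {U : H ≃ₗᵢ[ℂ] H} {W : Submodule ℂ H} {x : H} : x ∈ KW U W ↔
    ∀ ε > 0, ∀ᶠ n : ℕ in atTop, ∃ y ∈ W, ‖(U ^ n) x - y‖ < ε := Iff.rfl

lemma KW_closed (U : H ≃ₗᵢ[ℂ] H) (W : Submodule ℂ H) : IsClosed (KW U W : Set H) := by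
  rw [← isSeqClosed_iff_isClosed]
  intro s x hs hx ε hε
  obtain ⟨m, hm⟩ := ((Metric.tendsto_nhds.mp hx) (ε/2) (by positivity)).exists
  filter_upwards [hs m (ε/2) (by positivity)] with n h1
  obtain ⟨y, hy, hy'⟩ := h1
  refine ⟨y, hy, ?_⟩
  have h2 : ‖(U ^ n) x - (U ^ n) (s m)‖ < ε / 2 := by
    rw [← map_sub, LinearIsometryEquiv.norm_map, ← dist_eq_norm, dist_comm]; exact hm
  calc _ = ‖((U ^ n) x - (U ^ n) (s m)) + ((U ^ n) (s m) - y)‖ := by congr 1; abel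
    _ ≤ _ := norm_add_le _ _
    _ < ε := by linarith

lemma KW_U {U : H ≃ₗᵢ[ℂ] H} {W : Submodule ℂ H} {x : H} (hx : x ∈ KW U W) :
    U x ∈ KW U W := by
  intro ε hε
  filter_upwards [(tendsto_add_atTop_nat 1).eventually (hx ε hε)] with n h
  rwa [pow_succ, lie_mul_apply] at h

lemma KW_Us {U : H ≃ₗᵢ[ℂ] H} {W : Submodule ℂ H} {x : H} (hx : x ∈ KW U W) :
    U.symm x ∈ KW U W := by
  intro ε hε
  obtain ⟨N, hN⟩ := eventually_atTop.mp (hx ε hε)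
  refine eventually_atTop.mpr ⟨N + 1, fun n hn => ?_⟩
  obtain ⟨m, rfl⟩ : ∃ m, n = m + 1 := ⟨n - 1, by omega⟩
  rw [pow_succ, lie_mul_apply, LinearIsometryEquiv.apply_symm_apply]
  exact hN m (by omega)

lemma U_pow_T {U T : H ≃ₗᵢ[ℂ] H} (hUT : ∀ x, U (T x) = T (T (T (U x)))) (n : ℕ) (x : H) :
    (U ^ n) (T x) = (T ^ (3 ^ n)) ((U ^ n) x) := by
  have h1 : U * T = T ^ 3 * U := by
    ext x; simp [pow_succ, lie_mul_apply, hUT]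
  have h2 : ∀ k, U * T ^ k = T ^ (3 * k) * U := by
    intro k
    induction k with
    | zero => simp
    | succ k ih => rw [pow_succ, ← mul_assoc, ih, mul_assoc, h1, ← mul_assoc, ← pow_add]; rfl
  have h3 : U ^ n * T = T ^ (3 ^ n) * U ^ n := by
    induction n with
    | zero => simp
    | succ n ih => rw [pow_succ', mul_assoc, ih, ← mul_assoc, h2, mul_assoc, pow_succ']
  exact congrArg (fun A : H ≃ₗᵢ[ℂ] H => A x) h3

lemma pow_mem_of {T : H ≃ₗᵢ[ℂ] H} {W : Submodule ℂ H} (hW : ∀ y ∈ W, T y ∈ W) (n : ℕ) :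
    ∀ y ∈ W, (T ^ n) y ∈ W := by
  induction n with
  | zero => simp
  | succ n ih => intro y hy; rw [pow_succ', lie_mul_apply]; exact hW _ (ih y hy)

lemma KW_T {U T : H ≃ₗᵢ[ℂ] H} {W : Submodule ℂ H} (hUT : ∀ x, U (T x) = T (T (T (U x))))
    (hW : ∀ y ∈ W, T y ∈ W) {x : H} (hx : x ∈ KW U W) : T x ∈ KW U W := by
  intro ε hε
  filter_upwards [hx ε hε] with n h
  obtain ⟨y, hy, hy'⟩ := h
  refine ⟨(T ^ (3 ^ n)) y, pow_mem_of hW _ _ hy, ?_⟩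
  rwa [U_pow_T hUT, ← map_sub, LinearIsometryEquiv.norm_map]

lemma KW_orth {U : H ≃ₗᵢ[ℂ] H} {W W' : Submodule ℂ H}
    (hW : ∀ y ∈ W, ∀ z ∈ W', ⟪y, z⟫_ℂ = 0) {x x' : H} (hx : x ∈ KW U W) (hx' : x' ∈ KW U W') :
    ⟪x, x'⟫_ℂ = 0 := by
  rw [← norm_le_zero_iff]
  refine le_of_forall_pos_lt_add fun δ hδ => ?_
  set ε : ℝ := min 1 (δ / (2 * (‖x‖ + ‖x'‖ + 1))) with hεd
  have hD : 0 < 2 * (‖x‖ + ‖x'‖ + 1) := by positivity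
  have hε : 0 < ε := lt_min one_pos (by positivity)
  have hε1 : ε ≤ 1 := min_le_left _ _
  have hε2 : ε * (2 * (‖x‖ + ‖x'‖ + 1)) ≤ δ := by
    rw [← le_div_iff₀ hD]; exact min_le_right _ _
  obtain ⟨n, ⟨y, hy, hy'⟩, ⟨z, hz, hz'⟩⟩ := ((hx ε hε).and (hx' ε hε)).exists
  have e : ⟪x, x'⟫_ℂ = ⟪(U ^ n) x - y, (U ^ n) x'⟫_ℂ + ⟪y, (U ^ n) x' - z⟫_ℂ := by
    rw [inner_sub_left, inner_sub_right, hW y hy z hz, LinearIsometryEquiv.inner_map_map]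
    ring
  have hyn : ‖y‖ ≤ ‖x‖ + ε := by
    have : y = (U ^ n) x - ((U ^ n) x - y) := by abel
    calc ‖y‖ = ‖(U ^ n) x - ((U ^ n) x - y)‖ := by rw [← this]
      _ ≤ _ := norm_sub_le _ _
      _ ≤ _ := by rw [LinearIsometryEquiv.norm_map]; linarith
  rw [e]
  have i1 := norm_inner_le_norm (𝕜 := ℂ) ((U ^ n) x - y) ((U ^ n) x')
  have i2 := norm_inner_le_norm (𝕜 := ℂ) y ((U ^ n) x' - z)
  rw [LinearIsometryEquiv.norm_map] at i1
  have j1 : ‖(U ^ n) x - y‖ * ‖x'‖ ≤ ε * ‖x'‖ := by gcongr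
  have j2 : ‖y‖ * ‖(U ^ n) x' - z‖ ≤ (‖x‖ + ε) * ε := by gcongr
  refine (norm_add_le _ _).trans_lt ?_
  nlinarith [norm_nonneg x, norm_nonneg x']

lemma KW_exists [CompleteSpace H] {U : H ≃ₗᵢ[ℂ] H} {W : Submodule ℂ H} (w : ℕ → H)
    (hw : ∀ n, w n ∈ W) {r C c : ℝ} (hr : r < 1) (hc : 0 < c) 
    (h1 : ∀ n, ‖w (n+1) - U (w n)‖ ≤ C * r ^ n) (h2 : ∀ n, c ≤ ‖w n‖) :
    ∃ f ∈ KW U W, f ≠ 0 := by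
  let v : ℕ → H := fun n => (U ^ n).symm (w n)
  have hUv : ∀ n, (U ^ n) (v n) = w n := fun n => LinearIsometryEquiv.apply_symm_apply _ _
  have hv : CauchySeq v := by
    refine cauchySeq_of_le_geometric r C hr fun n => ?_
    rw [dist_comm, dist_eq_norm, ← LinearIsometryEquiv.norm_map (U ^ (n+1)), map_sub, hUv,
      pow_succ', lie_mul_apply, hUv]
    exact h1 n
  obtain ⟨f, hf⟩ := cauchySeq_tendsto_of_complete hv
  refine ⟨f, ?_, ?_⟩
  · intro ε hε
    filter_upwards [(Metric.tendsto_nhds.mp hf) ε hε] with n hn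
    refine ⟨w n, hw n, ?_⟩
    rw [← hUv n, ← map_sub, LinearIsometryEquiv.norm_map, ← dist_eq_norm, dist_comm]
    exact hn
  · rintro rfl
    have h3 := hf.norm
    have : c ≤ ‖(0:H)‖ := ge_of_tendsto' h3 fun n => by
      rw [← LinearIsometryEquiv.norm_map (U ^ n), hUv]; exact h2 n
    rw [norm_zero] at this
    linarith

theorem reducible_of {U T : H ≃ₗᵢ[ℂ] H} {W W' : Submodule ℂ H}
    (hUT : ∀ x, U (T x) = T (T (T (U x))))
    (hW : ∀ y ∈ W, ∀ z ∈ W', ⟪y, z⟫_ℂ = 0)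
    (hT : ∀ y ∈ W, T y ∈ W) (hT' : ∀ y ∈ W, T.symm y ∈ W)
    {f g : H} (hf : f ∈ KW U W) (hf0 : f ≠ 0) (hg : g ∈ KW U W') (hg0 : g ≠ 0) :
    ∃ K : Submodule ℂ H, IsClosed (K : Set H) ∧ K ≠ ⊥ ∧ K ≠ ⊤ ∧
      ∀ f ∈ K, U f ∈ K ∧ U.symm f ∈ K ∧ T f ∈ K ∧ T.symm f ∈ K := by
  refine ⟨KW U W, KW_closed U W, ?_, ?_, fun x hx => ⟨KW_U hx, KW_Us hx, KW_T hUT hT hx, ?_⟩⟩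
  · intro h; rw [h] at hf; exact hf0 ((Submodule.mem_bot ℂ).mp hf)
  · intro h
    have : g ∈ KW U W := by rw [h]; trivial
    exact hg0 (inner_self_eq_zero.mp (KW_orth hW this hg))
  · refine KW_T (T := T.symm) (fun x => ?_) hT' hx
    apply T.injective; apply T.injective; apply T.injective
    rw [← hUT]
    simp
end abstr


abbrev Circ := AddCircle (1:ℝ)
abbrev hm : Measure Circ := @AddCircle.haarAddCircle (1:ℝ) _

def q0 (x : Circ) : ℂ := ((Real.sqrt 2 : ℝ) : ℂ)⁻¹ * (1 + fourier 2 x)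

def qn : ℕ → Circ → ℂ
  | 0, _ => 1
  | (n+1), x => q0 x * qn n (3 • x)

lemma q0_cont : Continuous q0 := by unfold q0; fun_prop

lemma qn_cont (n : ℕ) : Continuous (qn n) := by
  induction n with
  | zero => exact continuous_const
  | succ n ih => exact q0_cont.mul (ih.comp (continuous_nsmul 3))

lemma qn_add (n k : ℕ) (x : Circ) : qn (n + k) x = qn n x * qn k (3 ^ n • x) := by
  induction n generalizing x with
  | zero => simp [qn]
  | succ n ih =>
    rw [show n + 1 + k = (n + k) + 1 by ring]
    simp only [qn]
    rw [ih, pow_succ, mul_nsmul', mul_assoc]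
    

lemma q0_neg (x : Circ) : q0 (-x) = (starRingEnd ℂ) (q0 x) := by
  unfold q0
  have : fourier 2 (-x) = (starRingEnd ℂ) (fourier 2 x) := by
    rw [← fourier_neg]; simp [fourier_apply]
  simp [this]

lemma qn_neg (n : ℕ) (x : Circ) : qn n (-x) = (starRingEnd ℂ) (qn n x) := by
  induction n generalizing x with
  | zero => simp [qn]
  | succ n ih => simp only [qn, q0_neg, smul_neg, ih, map_mul]

def third : Circ := ((1/3 : ℝ) : Circ)

lemma three_third : (3:ℕ) • third = 0 := by
  unfold third
  rw [← AddCircle.coe_nsmul]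
  norm_num
  

lemma f2_norm (x : Circ) : (fourier 2 x).re ^ 2 + (fourier 2 x).im ^ 2 = 1 := by
  have : ‖fourier 2 x‖ = 1 := by rw [fourier_apply]; exact Circle.norm_coe _
  have h := Complex.sq_norm (fourier 2 x)
  rw [this, Complex.normSq_apply] at h
  nlinarith

lemma zeta_re : (fourier 2 third).re = -1/2 := by
  unfold third
  rw [fourier_coe_apply]
  have : (2 * (Real.pi:ℂ) * Complex.I * ((2:ℤ):ℂ) * ((1/3:ℝ):ℂ) / ((1:ℝ):ℂ)) = ((Real.pi / 3 + Real.pi : ℝ):ℂ) * Complex.I := by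
    push_cast; ring
  rw [this, Complex.exp_ofReal_mul_I_re, Real.cos_add_pi, Real.cos_pi_div_three]
  norm_num

lemma f2_add (x y : Circ) : fourier 2 (x + y) = fourier 2 x * fourier 2 y := by
  simp [fourier_apply, smul_add, AddCircle.toCircle_add]

def cc (x : Circ) : ℝ := (fourier 2 x).re

lemma cc_sums (x : Circ) : cc x + cc (x + third) + cc (x + third + third) = 0 ∧
    cc x ^ 2 + cc (x + third) ^ 2 + cc (x + third + third) ^ 2 = 3 / 2 := by
  have h1 := f2_norm x
  have h2 := f2_norm third
  have h3 := zeta_re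
  simp only [cc, f2_add, Complex.mul_re, Complex.mul_im]
  set u := (fourier 2 x).re
  set v := (fourier 2 x).im
  set q := (fourier 2 third).im
  rw [h3] at h2 ⊢
  have hq : q ^ 2 = 3 / 4 := by linarith
  constructor
  · ring_nf; rw [hq]; ring
  · have : u * (-1 / 2) * (-1/2) - v * q * q = 0 → True := fun _ => trivial
    have e : (u * (-1 / 2) - v * q) * (-1 / 2) - (u * q + v * (-1 / 2)) * q = -u/2 + v * q := by
      linear_combination (-u) * hq
    rw [e]
    linear_combination (2 * v^2) * hq + 3/2 * h1

lemma q0_sq (x : Circ) : ‖q0 x‖ ^ 2 = 1 + cc x := by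
  have h1 := f2_norm x
  unfold q0 cc
  rw [norm_mul, mul_pow, norm_inv, Complex.norm_real, Real.norm_of_nonneg (Real.sqrt_nonneg 2),
    inv_pow, Real.sq_sqrt (by norm_num), Complex.sq_norm, Complex.normSq_apply]
  simp only [Complex.add_re, Complex.add_im, Complex.one_re, Complex.one_im]
  nlinarith

lemma q0_le (x : Circ) : ‖q0 x‖ ≤ 1 + cc x / 2 - cc x ^ 2 / 12 := by
  have h := q0_sq x
  have h1 := f2_norm x
  have hc : cc x ^ 2 ≤ 1 := by unfold cc; nlinarith [sq_nonneg (fourier 2 x).im]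
  have hc1 : -1 ≤ cc x := by nlinarith
  have hc2 : cc x ≤ 1 := by nlinarith
  refine abs_le_of_sq_le_sq' ?_ (by nlinarith) |>.2
  rw [h]
  have : 0 ≤ cc x ^ 2 * (1 - cc x) := mul_nonneg (sq_nonneg _) (by linarith)
  nlinarith [sq_nonneg (cc x ^ 2)]

lemma q0_sum_le (x : Circ) : ‖q0 x‖ + ‖q0 (x + third)‖ + ‖q0 (x + third + third)‖ ≤ 3 * (23/24) := by
  have h := cc_sums x
  linarith [q0_le x, q0_le (x + third), q0_le (x + third + third), h.1, h.2]

lemma q0_sum_sq (x : Circ) :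
    ‖q0 x‖^2 + ‖q0 (x + third)‖^2 + ‖q0 (x + third + third)‖^2 = 3 := by
  have h := cc_sums x
  rw [q0_sq, q0_sq, q0_sq]
  linarith [h.1]

lemma integrable_cont {g : Circ → ℝ} (hg : Continuous g) : Integrable g hm :=
  hg.integrable_of_hasCompactSupport (HasCompactSupport.of_compactSpace g)

lemma mpk (k : ℕ) (hk : k ≠ 0) : MeasurePreserving (fun x : Circ => k • x) hm hm := by
  have h := Measure.measurePreserving_zsmul hm (n := (k:ℤ)) (by exact_mod_cast hk)
  simpa only [natCast_zsmul] using h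

lemma mp3 : MeasurePreserving (fun x : Circ => 3 • x) hm hm := mpk 3 (by norm_num)

lemma transfer {b g : Circ → ℝ} (hb : Continuous b) (hg : Continuous g) :
    3 * ∫ x, b x * g (3 • x) ∂hm
      = ∫ x, (b x + b (x + third) + b (x + third + third)) * g (3 • x) ∂hm := by
  have h3 : Continuous fun x : Circ => g (3 • x) := hg.comp (continuous_nsmul 3)
  have e1 : ∫ x, b (x + third) * g (3 • x) ∂hm = ∫ x, b x * g (3 • x) ∂hm := by
    rw [← integral_add_right_eq_self (μ := hm) (fun x => b x * g (3 • x)) third]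
    simp [smul_add, three_third]
  have e2 : ∫ x, b (x + third + third) * g (3 • x) ∂hm = ∫ x, b (x + third) * g (3 • x) ∂hm := by
    rw [← integral_add_right_eq_self (μ := hm) (fun x => b (x + third) * g (3 • x)) third]
    simp [smul_add, three_third]
  simp only [add_mul]
  rw [integral_add, integral_add, e2, e1]
  · ring
  all_goals exact integrable_cont (by fun_prop)

lemma int3 {g : Circ → ℝ} (hg : Continuous g) : ∫ x, g (3 • x) ∂hm = ∫ x, g x ∂hm := by
  rw [← mp3.map_eq, integral_map mp3.measurable.aemeasurable (hg.aestronglyMeasurable), mp3.map_eq]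

lemma int_norm (n : ℕ) : ∫ x, ‖qn n x‖ ∂hm ≤ (23/24:ℝ) ^ n := by
  induction n with
  | zero => simp [qn]
  | succ n ih =>
    simp only [qn, norm_mul]
    have c := (qn_cont n).norm
    have h := transfer q0_cont.norm c
    have hc3 : Continuous fun x : Circ => ‖qn n (3 • x)‖ := c.comp (continuous_nsmul 3)
    have h2 : ∫ x, (‖q0 x‖ + ‖q0 (x + third)‖ + ‖q0 (x + third + third)‖) * ‖qn n (3 • x)‖ ∂hm
        ≤ ∫ x, 3 * (23/24) * ‖qn n (3 • x)‖ ∂hm := by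
      have := q0_cont
      refine integral_mono (integrable_cont (by fun_prop)) (integrable_cont (by fun_prop)) fun x => ?_
      exact mul_le_mul_of_nonneg_right (q0_sum_le x) (norm_nonneg _)
    rw [integral_const_mul, int3 c] at h2
    rw [pow_succ]
    linarith

lemma int_sq (n : ℕ) : ∫ x, ‖qn n x‖ ^ 2 ∂hm = 1 := by
  induction n with
  | zero => simp [qn]
  | succ n ih =>
    simp only [qn, norm_mul, mul_pow]
    have c : Continuous fun x => ‖qn n x‖ ^ 2 := (qn_cont n).norm.pow 2
    have h := transfer (b := fun x => ‖q0 x‖ ^ 2) (g := fun x => ‖qn n x‖ ^ 2) (q0_cont.norm.pow 2) c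
    simp only [q0_sum_sq] at h
    rw [integral_const_mul, int3 c, ih] at h
    linarith

lemma ae_tendsto : ∀ᵐ x ∂hm, Tendsto (fun n => ‖qn n x‖) atTop (𝓝 0) := by
  have h : ∫⁻ x, ∑' n, ‖qn n x‖ₑ ∂hm ≠ ⊤ := by
    rw [lintegral_tsum fun n => (qn_cont n).enorm.measurable.aemeasurable]
    refine ne_top_of_le_ne_top (b := ∑' n : ℕ, ENNReal.ofReal ((23/24:ℝ)^n)) ?_ ?_
    · rw [← ENNReal.ofReal_tsum_of_nonneg (fun n => by positivity)
        (summable_geometric_of_lt_one (by norm_num) (by norm_num))]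
      exact ENNReal.ofReal_ne_top
    · refine ENNReal.tsum_le_tsum fun n => ?_
      have hi : Integrable (qn n) hm := 
        (qn_cont n).integrable_of_hasCompactSupport (HasCompactSupport.of_compactSpace _)
      rw [← ofReal_integral_norm_eq_lintegral_enorm hi]
      exact ENNReal.ofReal_le_ofReal (int_norm n)
  have hme : Measurable fun x => ∑' n, ‖qn n x‖ₑ :=
    Measurable.tsum fun n => (qn_cont n).enorm.measurable
  filter_upwards [ae_lt_top hme h] with x hx
  have := ENNReal.tendsto_atTop_zero_of_tsum_ne_top hx.ne
  have h2 := (ENNReal.tendsto_toReal ENNReal.zero_ne_top).comp this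
  simpa [Function.comp_def] using h2

def EE : Set Circ := {x | ∀ k, ‖qn k x‖ ≤ 1}

lemma EE_meas : MeasurableSet EE := by
  have : EE = ⋂ k, {x | ‖qn k x‖ ≤ 1} := by ext x; simp [EE]
  rw [this]
  exact MeasurableSet.iInter fun k => 
    (isClosed_le (qn_cont k).norm continuous_const).measurableSet

lemma EE_neg {x : Circ} : -x ∈ EE ↔ x ∈ EE := by
  simp [EE, qn_neg]

lemma ae_visit : ∀ᵐ x ∂hm, ∃ n : ℕ, 3 ^ n • x ∈ EE := by
  filter_upwards [ae_tendsto] with x hx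
  obtain ⟨n, hn⟩ : ∃ n, ∀ k, ‖qn k x‖ ≤ ‖qn n x‖ := by
    obtain ⟨N, hN⟩ := eventually_atTop.mp (hx.eventually_lt_const one_pos)
    obtain ⟨n, -, hn⟩ := Finset.exists_max_image (Finset.range (N+1)) (fun k => ‖qn k x‖) ⟨0, by simp⟩
    refine ⟨n, fun k => ?_⟩
    by_cases hk : k < N + 1
    · exact hn k (by simpa using hk)
    · have := hN k (by omega)
      have h0 := hn 0 (by simp)
      simp only [qn, norm_one] at h0
      linarith
  refine ⟨n, fun k => ?_⟩
  have h0 := hn 0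
  simp only [qn, norm_one] at h0
  have h1 := hn (n + k)
  rw [qn_add, norm_mul] at h1
  by_contra! h
  nlinarith

def PP (Q : Set Circ) : Set Circ :=
  {x | ∃ n : ℕ, 3 ^ n • x ∈ EE ∧ (∀ j < n, 3 ^ j • x ∉ EE) ∧ 3 ^ n • x ∈ Q}

lemma PP_meas {Q : Set Circ} (hQ : MeasurableSet Q) : MeasurableSet (PP Q) := by
  have : PP Q = ⋃ n : ℕ, ((fun x : Circ => 3 ^ n • x) ⁻¹' EE ∩
      (⋂ j : ℕ, ⋂ _ : j < n, ((fun x : Circ => 3 ^ j • x) ⁻¹' EE)ᶜ) ∩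
      (fun x : Circ => 3 ^ n • x) ⁻¹' Q) := by
    ext x; simp [PP, and_assoc]
  rw [this]
  have hs : ∀ n : ℕ, Measurable fun x : Circ => 3 ^ n • x := fun n =>
    (continuous_nsmul (3 ^ n)).measurable
  refine MeasurableSet.iUnion fun n => ?_
  refine (((hs n) EE_meas).inter ?_).inter ((hs n) hQ)
  exact MeasurableSet.iInter fun j => MeasurableSet.iInter fun _ => ((hs j) EE_meas).compl

lemma PP_shift {Q : Set Circ} {x : Circ} (hx : x ∉ EE) : x ∈ PP Q ↔ 3 • x ∈ PP Q := by
  have e : ∀ n : ℕ, (3:ℕ) ^ n • (3 • x) = 3 ^ (n+1) • x := fun n => by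
    rw [pow_succ, mul_nsmul']
  constructor
  · rintro ⟨n, h1, h2, h3⟩
    rcases n with _ | n
    · simp at h1; exact absurd h1 hx
    · refine ⟨n, by rwa [e], fun j hj => ?_, by rwa [e]⟩
      rw [e]; exact h2 (j+1) (by omega)
  · rintro ⟨n, h1, h2, h3⟩
    rw [e] at h1 h3
    refine ⟨n+1, h1, fun j hj => ?_, h3⟩
    rcases j with _ | j
    · simpa using hx
    · rw [← e]; exact h2 j (by omega)

def Qp : Set Circ := {x | 0 < (fourier 1 x).im}
def Qm : Set Circ := {x | (fourier 1 x).im < 0}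

lemma Qp_meas : MeasurableSet Qp := 
  (isOpen_lt continuous_const (Complex.continuous_im.comp (fourier 1).continuous)).measurableSet
lemma Qm_meas : MeasurableSet Qm := 
  (isOpen_lt (Complex.continuous_im.comp (fourier 1).continuous) continuous_const).measurableSet

lemma Q_neg (x : Circ) : -x ∈ Qm ↔ x ∈ Qp := by
  have : fourier 1 (-x) = (starRingEnd ℂ) (fourier 1 x) := by
    rw [← fourier_neg]; simp [fourier_apply]
  simp only [Qp, Qm, Set.mem_ofPred_eq, this, Complex.conj_im]
  constructor <;> intro h <;> linarith

lemma PP_neg (x : Circ) : -x ∈ PP Qm ↔ x ∈ PP Qp := by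
  simp only [PP, Set.mem_ofPred_eq, smul_neg, EE_neg, Q_neg]

lemma PP_disj {x : Circ} (h1 : x ∈ PP Qp) (h2 : x ∈ PP Qm) : False := by
  obtain ⟨n, a1, a2, a3⟩ := h1
  obtain ⟨m, b1, b2, b3⟩ := h2
  have : n = m := by
    rcases lt_trichotomy n m with h | h | h
    · exact absurd a1 (b2 n h)
    · exact h
    · exact absurd b1 (a2 m h)
  subst this
  simp only [Qp, Qm, Set.mem_ofPred_eq] at a3 b3
  linarith

lemma third_ne : third ≠ 0 := by
  intro h
  have := zeta_re
  rw [h] at this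
  simp at this
  norm_num at this

lemma hm_zero : hm {(0:Circ)} = 0 := by
  have h1 : hm ((fun x : Circ => 3 • x) ⁻¹' {0}) = hm {0} :=
    mp3.measure_preimage (measurableSet_singleton _).nullMeasurableSet
  have h2 : hm {third} = hm {(0:Circ)} := by
    have := measure_preimage_add_right hm third {third}
    rw [← this]
    congr 1
    ext x; simp
  have h3 : ({0} ∪ {third} : Set Circ) ⊆ (fun x : Circ => 3 • x) ⁻¹' {0} := by
    rintro x (rfl | rfl)
    · simp
    · exact three_third
  have h4 := measure_mono (μ := hm) h3
  rw [h1, measure_union (by simpa using third_ne.symm) (measurableSet_singleton _), h2] at h4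
  have hf : hm {(0:Circ)} ≠ ⊤ := measure_ne_top _ _
  by_contra h0
  exact absurd h4 (not_le.mpr (ENNReal.lt_add_right hf h0))

lemma ae_Q : ∀ᵐ x ∂hm, x ∈ Qp ∨ x ∈ Qm := by
  have h0 : ∀ᵐ x ∂hm, x ≠ 0 := by
    rw [ae_iff]
    simp only [ne_eq, not_not, Set.ofPred_eq_eq_singleton]
    exact hm_zero
  filter_upwards [(mpk 2 (by norm_num)).quasiMeasurePreserving.ae h0] with x hx
  by_contra! hcon
  apply hx
  have him : (fourier 1 x).im = 0 := by
    simp only [Qp, Qm, Set.mem_ofPred_eq] at hcon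
    linarith
  have hn : ‖fourier 1 x‖ = 1 := by rw [fourier_apply]; exact Circle.norm_coe _
  have h := Complex.sq_norm (fourier 1 x)
  rw [hn, Complex.normSq_apply, him] at h
  have h2 : fourier 2 x = 1 := by
    rw [show (2:ℤ) = 1 + 1 by norm_num, fourier_add]
    apply Complex.ext
    · simp only [Complex.mul_re, him, Complex.one_re]; linarith
    · simp only [Complex.mul_im, him, Complex.one_im]; ring
  rw [fourier_apply] at h2
  have h3 : AddCircle.toCircle ((2:ℤ) • x) = AddCircle.toCircle (0:Circ) := by
    rw [AddCircle.toCircle_zero]; exact_mod_cast Circle.ext h2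
  have := AddCircle.injective_toCircle one_ne_zero h3
  exact_mod_cast this

lemma ae_Qk (k : ℕ) (hk : k ≠ 0) : ∀ᵐ x ∂hm, k • x ∈ Qp ∨ k • x ∈ Qm :=
  (mpk k hk).quasiMeasurePreserving.ae (p := fun y => y ∈ Qp ∨ y ∈ Qm) ae_Q

lemma ae_PP : ∀ᵐ x ∂hm, x ∈ PP Qp ∨ x ∈ PP Qm := by
  have h : ∀ᵐ x ∂hm, ∀ n : ℕ, (3 ^ n • x ∈ Qp ∨ 3 ^ n • x ∈ Qm) := by
    rw [ae_all_iff]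
    exact fun n => ae_Qk (3 ^ n) (pow_ne_zero n three_ne_zero)
  classical
  filter_upwards [h, ae_visit] with x h1 h2
  have hs := Nat.find_spec h2
  have hmn := fun j (hj : j < Nat.find h2) => Nat.find_min h2 hj
  rcases h1 (Nat.find h2) with h | h
  · exact Or.inl ⟨_, hs, hmn, h⟩
  · exact Or.inr ⟨_, hs, hmn, h⟩

lemma int_PP (n : ℕ) : ∫ x, (PP Qp).indicator (fun x => ‖qn n x‖ ^ 2) x ∂hm = 1 / 2 ∧
    ∫ x, (PP Qm).indicator (fun x => ‖qn n x‖ ^ 2) x ∂hm = 1 / 2 := by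
  have hi : Integrable (fun x => ‖qn n x‖ ^ 2) hm := integrable_cont ((qn_cont n).norm.pow 2)
  have e : ∫ x, (PP Qm).indicator (fun x => ‖qn n x‖ ^ 2) x ∂hm
      = ∫ x, (PP Qp).indicator (fun x => ‖qn n x‖ ^ 2) x ∂hm := by
    rw [← integral_neg_eq_self]
    congr 1
    funext x
    by_cases h : x ∈ PP Qp
    · have h' := (PP_neg x).2 h
      simp [h, h', qn_neg]
    · have h' : -x ∉ PP Qm := fun h' => h ((PP_neg x).1 h')
      simp [h, h']
  have s : ∫ x, (PP Qp).indicator (fun x => ‖qn n x‖ ^ 2) x ∂hm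
      + ∫ x, (PP Qm).indicator (fun x => ‖qn n x‖ ^ 2) x ∂hm = 1 := by
    rw [← integral_add (hi.indicator (PP_meas Qp_meas)) (hi.indicator (PP_meas Qm_meas))]
    refine Eq.trans ?_ (int_sq n)
    refine integral_congr_ae ?_
    filter_upwards [ae_PP] with x hx
    rcases hx with h | h
    · have : x ∉ PP Qm := fun h' => PP_disj h h'
      simp [h, this]
    · have : x ∉ PP Qp := fun h' => PP_disj h' h
      simp [h, this]
  constructor <;> linarith


abbrev L2C := Lp ℂ 2 hm

lemma L2_norm_sq (F : L2C) : ‖F‖ ^ 2 = ∫ x, ‖F x‖ ^ 2 ∂hm := by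
  have h := inner_self_eq_norm_sq_to_K (𝕜 := ℂ) F
  rw [L2.inner_def] at h
  have h2 : ∫ x, ⟪F x, F x⟫_ℂ ∂hm = ((∫ x, ‖F x‖ ^ 2 ∂hm : ℝ) : ℂ) := by
    rw [← integral_complex_ofReal]
    refine integral_congr_ae (Eventually.of_forall fun x => ?_)
    simp
  rw [h2] at h
  exact Complex.ofReal_injective ((Complex.ofReal_pow _ _).trans h.symm)

lemma mulF_memLp (k : ℤ) (F : L2C) : MemLp (fun x => fourier k x * F x) 2 hm := by
  refine (Lp.memLp F).of_le ?_ (Eventually.of_forall fun x => ?_)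
  · exact (fourier k).continuous.aestronglyMeasurable.mul (Lp.aestronglyMeasurable F)
  · rw [norm_mul, fourier_apply, Circle.norm_coe, one_mul]

def mulF (k : ℤ) : L2C →ₗᵢ[ℂ] L2C where
  toFun F := (mulF_memLp k F).toLp _
  map_add' F G := by
    apply Lp.ext
    filter_upwards [(mulF_memLp k (F+G)).coeFn_toLp, (mulF_memLp k F).coeFn_toLp,
      (mulF_memLp k G).coeFn_toLp, Lp.coeFn_add F G,
      Lp.coeFn_add ((mulF_memLp k F).toLp _) ((mulF_memLp k G).toLp _)] with x h1 h2 h3 h4 h5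
    rw [h1, h5, Pi.add_apply, h2, h3, h4, Pi.add_apply, mul_add]
  map_smul' c F := by
    apply Lp.ext
    filter_upwards [(mulF_memLp k (c • F)).coeFn_toLp, (mulF_memLp k F).coeFn_toLp,
      Lp.coeFn_smul c F, Lp.coeFn_smul c ((mulF_memLp k F).toLp _)] with x h1 h2 h3 h4
    simp only [RingHom.id_apply]
    rw [h1, h4, Pi.smul_apply, h2, h3, Pi.smul_apply, smul_eq_mul, smul_eq_mul]; ring
  norm_map' F := by
    have h : ‖(mulF_memLp k F).toLp _‖ ^ 2 = ‖F‖ ^ 2 := by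
      rw [L2_norm_sq, L2_norm_sq]
      refine integral_congr_ae ?_
      filter_upwards [(mulF_memLp k F).coeFn_toLp] with x h1
      rw [h1, norm_mul, fourier_apply, Circle.norm_coe, one_mul]
    exact (pow_left_inj₀ (norm_nonneg _) (norm_nonneg _) two_ne_zero).1 h

lemma mulF_ae (k : ℤ) (F : L2C) : ⇑(mulF k F) =ᵐ[hm] fun x => fourier k x * F x :=
  (mulF_memLp k F).coeFn_toLp

lemma mulF_fourier (k l : ℤ) : mulF k (fourierLp 2 l) = fourierLp 2 (k + l) := by
  apply Lp.ext
  filter_upwards [mulF_ae k (fourierLp 2 l), coeFn_fourierLp (T := (1:ℝ)) 2 l,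
    coeFn_fourierLp (T := (1:ℝ)) 2 (k + l)] with x h1 h2 h3
  rw [h1, h2, h3, fourier_add]

def C3 : L2C →ₗᵢ[ℂ] L2C := Lp.compMeasurePreservingₗᵢ ℂ (fun x : Circ => 3 • x) mp3

lemma C3_ae (F : L2C) : ⇑(C3 F) =ᵐ[hm] fun x => F (3 • x) :=
  Lp.coeFn_compMeasurePreserving F mp3

lemma C3_fourier (l : ℤ) : C3 (fourierLp 2 l) = fourierLp 2 (3 * l) := by
  apply Lp.ext
  have h := mp3.quasiMeasurePreserving.ae_eq_comp (coeFn_fourierLp (T := (1:ℝ)) 2 l)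
  filter_upwards [C3_ae (fourierLp 2 l), h,
    coeFn_fourierLp (T := (1:ℝ)) 2 (3 * l)] with x h1 h2 h3
  simp only [Function.comp_apply] at h2
  rw [h1, h3, h2]
  simp only [fourier_apply]
  rw [mul_comm, mul_zsmul]
  norm_cast

lemma ext_fourier {H : Type*} [NormedAddCommGroup H] [InnerProductSpace ℂ H]
    {A B : L2C →L[ℂ] H} (h : ∀ k : ℤ, A (fourierLp 2 k) = B (fourierLp 2 k)) : A = B := by
  refine ContinuousLinearMap.ext_on (s := Set.range (@fourierLp (1:ℝ) _ 2 _)) ?_ ?_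
  · rw [dense_iff_closure_eq]
    have := span_fourierLp_closure_eq_top (T := (1:ℝ)) (p := 2) (by norm_num)
    have h2 := congrArg (fun S : Submodule ℂ _ => (S : Set L2C)) this
    simpa using h2
  · rintro _ ⟨k, rfl⟩; exact h k

section J
variable {H : Type*} [NormedAddCommGroup H] [InnerProductSpace ℂ H] [CompleteSpace H]

lemma orth_T {T : H ≃ₗᵢ[ℂ] H} {φ : H} (h1 : ‖φ‖ = 1)
    (h2 : ∀ k : ℕ, k ≠ 0 → ⟪φ, (T ^ k) φ⟫_ℂ = 0) :
    Orthonormal ℂ (fun k : ℤ => (T ^ k) φ) := by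
  have key : ∀ (k : ℤ) (n : ℕ), n ≠ 0 → ⟪(T ^ k) φ, (T ^ (k + n)) φ⟫_ℂ = 0 := by
    intro k n hn
    rw [zpow_add, lie_mul_apply, LinearIsometryEquiv.inner_map_map, zpow_natCast]
    exact h2 n hn
  refine ⟨fun k => by rw [LinearIsometryEquiv.norm_map, h1], fun i j hij => ?_⟩
  rcases lt_or_gt_of_ne hij with h | h
  · obtain ⟨n, hn⟩ := Int.eq_ofNat_of_zero_le (sub_nonneg.2 h.le)
    have := key i n (by rintro rfl; simp at hn; omega)
    rwa [← hn, add_sub_cancel] at this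
  · obtain ⟨n, hn⟩ := Int.eq_ofNat_of_zero_le (sub_nonneg.2 h.le)
    have := key j n (by rintro rfl; simp at hn; omega)
    rw [← hn, add_sub_cancel] at this
    exact inner_eq_zero_symm.1 this

lemma exists_J {v : ℤ → H} (hv : Orthonormal ℂ v) :
    ∃ J : L2C →ₗᵢ[ℂ] H, ∀ k, J (fourierLp 2 k) = v k := by
  refine ⟨hv.orthogonalFamily.linearIsometry.comp
    (fourierBasis (T := (1:ℝ))).repr.toLinearIsometry, fun k => ?_⟩
  have h := (fourierBasis (T := (1:ℝ))).repr_self k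
  rw [coe_fourierBasis] at h
  refine (congrArg hv.orthogonalFamily.linearIsometry h).trans ?_
  refine (OrthogonalFamily.linearIsometry_apply_single hv.orthogonalFamily (1:ℂ)).trans ?_
  simp

lemma T_J {T : H ≃ₗᵢ[ℂ] H} {φ : H} {J : L2C →ₗᵢ[ℂ] H}
    (hJ : ∀ k : ℤ, J (fourierLp 2 k) = (T ^ k) φ) (l : ℤ) (F : L2C) :
    (T ^ l) (J F) = J (mulF l F) := by
  have : ((T ^ l).toLinearIsometry.comp J).toContinuousLinearMap
      = (J.comp (mulF l)).toContinuousLinearMap := by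
    refine ext_fourier fun k => ?_
    simp [hJ, mulF_fourier, zpow_add, lie_mul_apply]
  exact congrArg (fun A : L2C →L[ℂ] H => A F) this

lemma U_J {U T : H ≃ₗᵢ[ℂ] H} {φ : H} {J : L2C →ₗᵢ[ℂ] H}
    (hUT : ∀ x, U (T x) = T (T (T (U x))))
    (hφ : U φ = ((Real.sqrt 2 : ℝ) : ℂ)⁻¹ • (φ + T (T φ)))
    (hJ : ∀ k : ℤ, J (fourierLp 2 k) = (T ^ k) φ) (F : L2C) :
    U (J F) = ((Real.sqrt 2 : ℝ) : ℂ)⁻¹ • (J (C3 F) + J (mulF 2 (C3 F))) := by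
  have hs : SemiconjBy U T (T ^ (3:ℤ)) := by
    have e3 : T ^ (3:ℤ) = T * T * T := by
      rw [show (3:ℤ) = 1 + 1 + 1 by norm_num, zpow_add, zpow_add, zpow_one]
    rw [e3]
    ext x
    simp [lie_mul_apply, hUT]
  have hsk : ∀ (k : ℤ) x, U ((T ^ k) x) = (T ^ (3 * k)) (U x) := by
    intro k x
    have := (hs.zpow_right k).eq
    rw [← zpow_mul] at this
    exact congrArg (fun A : H ≃ₗᵢ[ℂ] H => A x) this
  have : (U.toLinearIsometry.comp J).toContinuousLinearMap
      = ((Real.sqrt 2 : ℝ) : ℂ)⁻¹ • ((J.comp C3).toContinuousLinearMap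
        + ((J.comp (mulF 2)).comp C3).toContinuousLinearMap) := by
    refine ext_fourier fun k => ?_
    have e : (T ^ (3 * k)) (T (T φ)) = (T ^ (2 + 3 * k)) φ := by
      rw [add_comm, zpow_add, lie_mul_apply, show (2:ℤ) = 1 + 1 by norm_num, zpow_add, zpow_one,
        lie_mul_apply]
    simp [hJ, C3_fourier, mulF_fourier, hsk, hφ, e]
  exact congrArg (fun A : L2C →L[ℂ] H => A F) this

lemma U_J' {U T : H ≃ₗᵢ[ℂ] H} {φ : H} {J : L2C →ₗᵢ[ℂ] H}
    (hUT : ∀ x, U (T x) = T (T (T (U x))))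
    (hφ : U φ = ((Real.sqrt 2 : ℝ) : ℂ)⁻¹ • (φ + T (T φ)))
    (hJ : ∀ k : ℤ, J (fourierLp 2 k) = (T ^ k) φ) (F G : L2C)
    (hG : ∀ᵐ x ∂hm, G x = q0 x * F (3 • x)) :
    U (J F) = J G := by
  rw [U_J hUT hφ hJ, ← map_add, ← map_smul]
  congr 1
  apply Lp.ext
  filter_upwards [Lp.coeFn_smul (((Real.sqrt 2 : ℝ) : ℂ)⁻¹) (C3 F + mulF 2 (C3 F)),
    Lp.coeFn_add (C3 F) (mulF 2 (C3 F)), mulF_ae 2 (C3 F), C3_ae F, hG] with x h1 h2 h3 h4 h5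
  rw [h1, Pi.smul_apply, h2, Pi.add_apply, h3, h4, h5, q0, smul_eq_mul]
  ring

def SP (P : Set Circ) : Submodule ℂ L2C where
  carrier := {F | ∀ᵐ x ∂hm, x ∉ P → F x = 0}
  zero_mem' := by
    filter_upwards [Lp.coeFn_zero ℂ 2 hm] with x hx _
    rw [hx]; rfl
  add_mem' := by
    intro F G hF hG
    filter_upwards [hF, hG, Lp.coeFn_add F G] with x h1 h2 h3 h4
    rw [h3, Pi.add_apply, h1 h4, h2 h4, add_zero]
  smul_mem' := by
    intro c F hF
    filter_upwards [hF, Lp.coeFn_smul c F] with x h1 h3 h4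
    rw [h3, Pi.smul_apply, h1 h4, smul_zero]

lemma mem_SP {P : Set Circ} {F : L2C} : F ∈ SP P ↔ ∀ᵐ x ∂hm, x ∉ P → F x = 0 := Iff.rfl

lemma SP_mul {P : Set Circ} {F : L2C} (hF : F ∈ SP P) (k : ℤ) : mulF k F ∈ SP P := by
  rw [mem_SP] at *
  filter_upwards [hF, mulF_ae k F] with x h1 h2 h3
  rw [h2, h1 h3, mul_zero]

def WP (J : L2C →ₗᵢ[ℂ] H) (P : Set Circ) : Submodule ℂ H := (SP P).map J.toLinearMap

lemma WP_T {T : H ≃ₗᵢ[ℂ] H} {φ : H} {J : L2C →ₗᵢ[ℂ] H}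
    (hJ : ∀ k : ℤ, J (fourierLp 2 k) = (T ^ k) φ) (P : Set Circ) (l : ℤ) :
    ∀ y ∈ WP J P, (T ^ l) y ∈ WP J P := by
  rintro _ ⟨F, hF, rfl⟩
  exact ⟨mulF l F, SP_mul hF l, (T_J hJ l F).symm⟩

lemma WP_orth (J : L2C →ₗᵢ[ℂ] H) {P P' : Set Circ} (h : ∀ x ∈ P, x ∉ P') :
    ∀ y ∈ WP J P, ∀ z ∈ WP J P', ⟪y, z⟫_ℂ = 0 := by
  rintro _ ⟨F, hF, rfl⟩ _ ⟨G, hG, rfl⟩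
  have e : ⟪J F, J G⟫_ℂ = ⟪F, G⟫_ℂ := J.inner_map_map F G
  refine e.trans ?_
  rw [L2.inner_def]
  apply integral_eq_zero_of_ae
  filter_upwards [mem_SP.1 hF, mem_SP.1 hG] with x h1 h2
  by_cases hx : x ∈ P
  · simp [h2 (h x hx)]
  · simp [h1 hx]

lemma ind_memLp {P : Set Circ} (hP : MeasurableSet P) (n : ℕ) :
    MemLp (P.indicator (qn n)) 2 hm :=
  MemLp.indicator hP ((qn_cont n).memLp_of_hasCompactSupport (HasCompactSupport.of_compactSpace _))

lemma exists_KW {U T : H ≃ₗᵢ[ℂ] H} {φ : H} {J : L2C →ₗᵢ[ℂ] H}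
    (hUT : ∀ x, U (T x) = T (T (T (U x))))
    (hφ : U φ = ((Real.sqrt 2 : ℝ) : ℂ)⁻¹ • (φ + T (T φ)))
    (hJ : ∀ k : ℤ, J (fourierLp 2 k) = (T ^ k) φ) {P : Set Circ} (hP : MeasurableSet P)
    (hs : ∀ x, x ∉ EE → (x ∈ P ↔ 3 • x ∈ P))
    (hi : ∀ n, ∫ x, P.indicator (fun x => ‖qn n x‖ ^ 2) x ∂hm = 1 / 2) :
    ∃ f ∈ KW U (WP J P), f ≠ 0 := by
  have hP' : MeasurableSet ((fun x : Circ => 3 • x) ⁻¹' P) := mp3.measurable hP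
  let w : ℕ → L2C := fun n => (ind_memLp hP n).toLp _
  let w' : ℕ → L2C := fun n => (ind_memLp hP' (n+1)).toLp _
  have hw : ∀ n, ⇑(w n) =ᵐ[hm] P.indicator (qn n) := fun n => (ind_memLp hP n).coeFn_toLp
  have hw' : ∀ n, ⇑(w' n) =ᵐ[hm] ((fun x : Circ => 3 • x) ⁻¹' P).indicator (qn (n+1)) :=
    fun n => (ind_memLp hP' (n+1)).coeFn_toLp
  have hUw : ∀ n, U (J (w n)) = J (w' n) := by
    intro n
    refine U_J' hUT hφ hJ _ _ ?_
    filter_upwards [hw' n, mp3.quasiMeasurePreserving.ae_eq_comp (hw n)] with x h1 h2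
    simp only [Function.comp_apply] at h2
    rw [h1, h2]
    by_cases h : 3 • x ∈ P
    · have h' : x ∈ (fun x : Circ => 3 • x) ⁻¹' P := h
      rw [Set.indicator_of_mem h, Set.indicator_of_mem h']; rfl
    · have h' : x ∉ (fun x : Circ => 3 • x) ⁻¹' P := h
      rw [Set.indicator_of_notMem h, Set.indicator_of_notMem h', mul_zero]
  have hr : Real.sqrt (23/24) < 1 := by
    rw [Real.sqrt_lt' one_pos]; norm_num
  refine KW_exists (fun n => J (w n)) (r := Real.sqrt (23/24)) (C := Real.sqrt (23/24))
    (c := Real.sqrt (1/2)) ?_ hr (by positivity) ?_ ?_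
  · intro n
    refine ⟨w n, ?_, rfl⟩
    change w n ∈ SP P
    rw [mem_SP]
    filter_upwards [hw n] with x h1 h2
    rw [h1, Set.indicator_of_notMem h2]
  · intro n
    simp only [hUw]
    rw [← map_sub, J.norm_map, ← pow_succ']
    refine abs_le_of_sq_le_sq' ?_ (by positivity) |>.2
    rw [L2_norm_sq, ← pow_mul, mul_comm, pow_mul, Real.sq_sqrt (by norm_num)]
    refine le_trans ?_ (int_norm (n+1))
    refine integral_mono_of_nonneg (Eventually.of_forall fun x => by positivity)
      (integrable_cont (qn_cont (n+1)).norm) ?_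
    filter_upwards [Lp.coeFn_sub (w (n+1)) (w' n), hw (n+1), hw' n] with x h1 h2 h3
    rw [h1, Pi.sub_apply, h2, h3]
    by_cases hx : x ∈ EE
    · have hb := hx (n+1)
      have h0 := norm_nonneg (qn (n+1) x)
      by_cases ha : x ∈ P <;> by_cases hc : x ∈ (fun x : Circ => 3 • x) ⁻¹' P <;>
        simp only [Set.indicator_of_mem, Set.indicator_of_notMem, ha, hc, not_false_eq_true, sub_self, sub_zero,
          zero_sub, norm_neg, norm_zero] <;> nlinarith
    · have e : P.indicator (qn (n+1)) x
          = ((fun x : Circ => 3 • x) ⁻¹' P).indicator (qn (n+1)) x := by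
        have h := hs x hx
        by_cases ha : x ∈ P
        · have hb : x ∈ (fun x : Circ => 3 • x) ⁻¹' P := h.1 ha
          rw [Set.indicator_of_mem ha, Set.indicator_of_mem hb]
        · have hb : x ∉ (fun x : Circ => 3 • x) ⁻¹' P := fun hb => ha (h.2 hb)
          rw [Set.indicator_of_notMem ha, Set.indicator_of_notMem hb]
      rw [e, sub_self, norm_zero]
      simp
  · intro n
    rw [J.norm_map]
    refine Real.sqrt_le_iff.2 ⟨norm_nonneg _, ?_⟩
    rw [L2_norm_sq, ← hi n]
    refine le_of_eq (integral_congr_ae ?_)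
    filter_upwards [hw n] with x h1
    rw [h1]
    by_cases ha : x ∈ P <;> simp [ha]

end J

/-- **Packer's question.** On `H = L²(ℛ, ℋ^s)`, the representation generated by the unitary
dilation `(U f)(x) = 2^{-1/2} f(x/3)` and the unitary translation `(T f)(x) = f(x - 1)` is
reducible: it admits a nontrivial proper closed invariant subspace. -/
theorem cantor_wavelet_representation_reducible
    (U T : Lp ℂ 2 cantorMeasure ≃ₗᵢ[ℂ] Lp ℂ 2 cantorMeasure)
    (hU : ∀ f : Lp ℂ 2 cantorMeasure,
      ⇑(U f) =ᵐ[cantorMeasure] fun x => ((Real.sqrt 2 : ℝ) : ℂ)⁻¹ * f (x / 3))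
    (hT : ∀ f : Lp ℂ 2 cantorMeasure, ⇑(T f) =ᵐ[cantorMeasure] fun x => f (x - 1)) :
    ∃ K : Submodule ℂ (Lp ℂ 2 cantorMeasure),
      IsClosed (K : Set (Lp ℂ 2 cantorMeasure)) ∧ K ≠ ⊥ ∧ K ≠ ⊤ ∧
      ∀ f ∈ K, U f ∈ K ∧ U.symm f ∈ K ∧ T f ∈ K ∧ T.symm f ∈ K := by
  have hUT := UT_comm U T hU hT
  have hn : ‖phi0‖ ≠ 0 := norm_ne_zero_iff.2 phi0_ne
  let φ : Lp ℂ 2 cantorMeasure := ((‖phi0‖ : ℝ) : ℂ)⁻¹ • phi0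
  have h1 : ‖φ‖ = 1 := by
    simp only [φ]
    rw [norm_smul, norm_inv, Complex.norm_real, norm_norm, inv_mul_cancel₀ hn]
  have hφ : U φ = ((Real.sqrt 2 : ℝ) : ℂ)⁻¹ • (φ + T (T φ)) := by
    simp only [φ, map_smul]
    rw [U_phi0 U T hU hT, ← smul_add, smul_comm]
  have h2 : ∀ k : ℕ, k ≠ 0 → ⟪φ, (T ^ k) φ⟫_ℂ = 0 := by
    intro k hk
    simp only [φ, map_smul]
    rw [inner_smul_left, inner_smul_right, inner_T_pow T hT k hk]
    simp
  obtain ⟨J, hJ⟩ := exists_J (orth_T h1 h2)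
  obtain ⟨f, hf, hf0⟩ := exists_KW hUT hφ hJ (PP_meas Qp_meas) (fun x hx => PP_shift hx)
    (fun n => (int_PP n).1)
  obtain ⟨g, hg, hg0⟩ := exists_KW hUT hφ hJ (PP_meas Qm_meas) (fun x hx => PP_shift hx)
    (fun n => (int_PP n).2)
  refine reducible_of hUT (WP_orth J fun x h h' => PP_disj h h') ?_ ?_ hf hf0 hg hg0
  · intro y hy
    simpa using WP_T hJ (PP Qp) 1 y hy
  · intro y hy
    have := WP_T hJ (PP Qp) (-1) y hy
    rw [zpow_neg_one] at this
    exact this
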